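/- Bound on the interfering-channel cross term: with the notation below, Σ_{k1D,k10,k2D,k20} C(k1D,k10,k2D,k20)·((P^D)_{k2D,k20} − π)·π³ ≤ c₃·(√λ)^D, where c₃ = Σ_{k2D,k10,k1D} (max_{k20} C(k1D,k10,k2D,k20))·π²·√π. -/

import Mathlib

/-!
Fix all indices but `k20`. Hölder's inequality in the `ℓ^∞`–`ℓ¹` form bounds the sum over `k20` by
the largest weight times the `ℓ¹` distance of a row from the uniform distribution, which is at most
`√(N ρ)` with `ρ = λ ^ D`. One of the three factors `π = 1 / N` turns `√N` into
`√π`.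
-/

theorem sum_mul_le_sup'_mul_sum_abs {ι R : Type*} [Ring R] [LinearOrder R] [IsOrderedRing R]
    {s : Finset ι} (hs : s.Nonempty) {f : ι → R} (hf : ∀ i ∈ s, 0 ≤ f i) (g : ι → R) :
    ∑ i ∈ s, f i * g i ≤ s.sup' hs f * ∑ i ∈ s, |g i| := by
  rw [Finset.mul_sum]
  refine Finset.sum_le_sum fun i hi => ?_
  calc
    f i * g i ≤ f i * |g i| := mul_le_mul_of_nonneg_left (le_abs_self _) (hf i hi)
    _ ≤ s.sup' hs f * |g i| :=
      mul_le_mul_of_nonneg_right (Finset.le_sup' f hi) (abs_nonneg _)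

theorem mul_one_div_le_sqrt_mul_sqrt_of_sq_le_mul {n ρ x : ℝ} (hn : 0 < n) (h : x ^ 2 ≤ n * ρ) :
    x * (1 / n) ≤ √(1 / n) * √ρ := by
  rw [← Real.sqrt_mul (by positivity)]
  refine Real.le_sqrt_of_sq_le ?_
  calc
    (x * (1 / n)) ^ 2 = x ^ 2 * (1 / n) ^ 2 := mul_pow _ _ _
    _ ≤ n * ρ * (1 / n) ^ 2 := by gcongr
    _ = 1 / n * ρ := by field_simp

theorem sqrt_pow_eq_pow_sqrt {x : ℝ} (hx : 0 ≤ x) (n : ℕ) : √(x ^ n) = √x ^ n := by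
  rw [Real.sqrt_eq_iff_eq_sq (pow_nonneg hx n) (pow_nonneg (Real.sqrt_nonneg x) n), pow_right_comm,
    Real.sq_sqrt hx]

theorem sum_mul_mul_one_div_le_sup'_mul_sqrt {ι : Type*} {s : Finset ι} (hs : s.Nonempty)
    {f g : ι → ℝ} (hf : ∀ i ∈ s, 0 ≤ f i) {n ρ : ℝ} (hn : 0 < n)
    (hg : (∑ i ∈ s, |g i|) ^ 2 ≤ n * ρ) :
    (∑ i ∈ s, f i * g i) * (1 / n) ≤ s.sup' hs f * (√(1 / n) * √ρ) := by
  have sup_nonneg : 0 ≤ s.sup' hs f :=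
    let ⟨i, hi⟩ := hs
    (hf i hi).trans (Finset.le_sup' f hi)
  calc
    (∑ i ∈ s, f i * g i) * (1 / n) ≤ s.sup' hs f * (∑ i ∈ s, |g i|) * (1 / n) := by
      gcongr
      exact sum_mul_le_sup'_mul_sum_abs hs hf g
    _ = s.sup' hs f * ((∑ i ∈ s, |g i|) * (1 / n)) := mul_assoc _ _ _
    _ ≤ s.sup' hs f * (√(1 / n) * √ρ) :=
      mul_le_mul_of_nonneg_left (mul_one_div_le_sqrt_mul_sqrt_of_sq_le_mul hn hg) sup_nonneg

theorem interfering_channel_cross_term_bound_general {ι : Type*} [Fintype ι] [Nonempty ι]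
    (Q : Matrix ι ι ℝ) (ρ : ℝ)
    (hQ : ∀ l, (∑ m, |Q l m - 1 / (Fintype.card ι : ℝ)|) ^ 2 ≤ (Fintype.card ι : ℝ) * ρ)
    (C : ι × ι × ι × ι → ℝ) (hC : ∀ x, 0 ≤ C x) :
    (∑ k1D, ∑ k10, ∑ k2D, ∑ k20,
        C (k1D, k10, k2D, k20) * (Q k2D k20 - 1 / (Fintype.card ι : ℝ))
          * (1 / (Fintype.card ι : ℝ)) ^ 3)
      ≤ (∑ k2D, ∑ k10, ∑ k1D,
          (Finset.univ.sup' Finset.univ_nonempty fun k20 => C (k1D, k10, k2D, k20))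
            * (1 / (Fintype.card ι : ℝ)) ^ 2 * √(1 / (Fintype.card ι : ℝ)))
        * √ρ := by
  have card_pos : (0 : ℝ) < Fintype.card ι := Nat.cast_pos.mpr Fintype.card_pos
  set π : ℝ := 1 / Fintype.card ι
  let M (k1D k10 k2D : ι) : ℝ :=
    Finset.univ.sup' Finset.univ_nonempty fun k20 => C (k1D, k10, k2D, k20)
  have row_bound (k1D k10 k2D : ι) :
      ∑ k20, C (k1D, k10, k2D, k20) * (Q k2D k20 - π) * π ^ 3
        ≤ M k1D k10 k2D * π ^ 2 * √π * √ρ :=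
    calc
      _ = (∑ k20, C (k1D, k10, k2D, k20) * (Q k2D k20 - π)) * π * π ^ 2 := by
        rw [← Finset.sum_mul]; ring
      _ ≤ M k1D k10 k2D * (√π * √ρ) * π ^ 2 :=
        mul_le_mul_of_nonneg_right
          (sum_mul_mul_one_div_le_sup'_mul_sqrt _ (fun _ _ => hC _) card_pos (hQ k2D))
          (sq_nonneg π)
      _ = M k1D k10 k2D * π ^ 2 * √π * √ρ := by ring
  calc
    _ ≤ ∑ k1D, ∑ k10, ∑ k2D, M k1D k10 k2D * π ^ 2 * √π * √ρ := by
      gcongr with k1D _ k10 _ k2D _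
      exact row_bound k1D k10 k2D
    _ = ∑ k2D, ∑ k10, ∑ k1D, M k1D k10 k2D * π ^ 2 * √π * √ρ := by
      rw [Finset.sum_comm_cycle]
      exact Finset.sum_congr rfl fun _ _ => Finset.sum_comm
    _ = (∑ k2D, ∑ k10, ∑ k1D, M k1D k10 k2D * π ^ 2 * √π) * √ρ := by
      simp only [Finset.sum_mul]

/-- Bound on the interfering-channel cross term:
`Σ C·((P^D)_{k2D,k20} − π)·π³ ≤ c₃·(√λ)^D`, where
`c₃ = Σ_{k2D,k10,k1D} (max_{k20} C)·π²·√π` and `π = 1/N`.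
`P` is row stochastic and satisfies the Markov convergence bound
`(Σ_m |(P^D)_{lm} − 1/N|)² ≤ N·λ^D`. -/
theorem interfering_channel_cross_term_bound (N : ℕ) [NeZero N]
    (P : Matrix (Fin N) (Fin N) ℝ)
    (hP0 : ∀ l m, 0 ≤ P l m) (hP1 : ∀ l, ∑ m, P l m = 1)
    (lam : ℝ) (hlam0 : 0 ≤ lam) (hlam1 : lam ≤ 1) (D : ℕ)
    (hconv : ∀ l, (∑ m, |(P ^ D) l m - 1 / (N : ℝ)|) ^ 2 ≤ (N : ℝ) * lam ^ D)
    (C : Fin N × Fin N × Fin N × Fin N → ℝ) (hC : ∀ x, 0 ≤ C x) :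
    (∑ k1D : Fin N, ∑ k10 : Fin N, ∑ k2D : Fin N, ∑ k20 : Fin N,
        C (k1D, k10, k2D, k20) * ((P ^ D) k2D k20 - 1 / (N : ℝ))
          * (1 / (N : ℝ)) ^ 3)
      ≤ (∑ k2D : Fin N, ∑ k10 : Fin N, ∑ k1D : Fin N,
          (Finset.univ.sup' Finset.univ_nonempty fun k20 : Fin N =>
              C (k1D, k10, k2D, k20))
            * (1 / (N : ℝ)) ^ 2 * Real.sqrt (1 / (N : ℝ)))
        * Real.sqrt lam ^ D := by
  simpa only [Fintype.card_fin, sqrt_pow_eq_pow_sqrt hlam0] using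
    interfering_channel_cross_term_bound_general (P ^ D) (lam ^ D) (by simpa using hconv) C hC
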